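/- Let d ≥ 1 and a, b : Fin d → ℝ with a i < b i for every i, and let D = {y ∈ EuclideanSpace ℝ (Fin d) : ∀ i, a i ≤ y i ≤ b i}. Let ν be a probability measure on EuclideanSpace ℝ (Fin d) that has a density g with respect to Lebesgue measure (ν = volume.withDensity g), and suppose there is c > 0 with g y ≥ c for Lebesgue-almost every y ∈ D. Then for every x ∈ D and every δ > 0, ν(Metric.ball x δ ∩ D) ≥ c · ∏ i, min (δ / Real.sqrt d) (b i - a i); in particular ν(Metric.ball x δ ∩ D) > 0. -/

import Mathlib

open MeasureTheory ENNReal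

/-!
The Euclidean ball of radius `δ` contains the cube of all points within `δ / √d` of its centre in
every coordinate. Intersecting this cube with the box gives a product of intervals. Since `x i` lies
in `[a i, b i]`, the `i`-th of them is all of `[a i, b i]` or contains one of the two halves, of
length `δ / √d`, of the cube's side, so its length is at least `min (δ / √d) (b i - a i)`.
-/

section Geometry

variable {ι : Type*} [Fintype ι]

lemma piLp_dist_lt_of_forall_dist_lt_div {p : ℝ≥0∞} [Fact (1 ≤ p)]
    {β : ι → Type*} [∀ i, PseudoMetricSpace (β i)] {x y : PiLp p β} {δ : ℝ} (hδ : 0 < δ)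
    (hxy : ∀ i, dist (x i) (y i) < δ / (Fintype.card ι : ℝ) ^ (1 / p).toReal) :
    dist x y < δ := by
  cases isEmpty_or_nonempty ι
  · rwa [Subsingleton.elim x y, dist_self]
  have hcard : 0 < (Fintype.card ι : ℝ) ^ (1 / p).toReal := by positivity
  have hsup : dist x.ofLp y.ofLp < δ / (Fintype.card ι : ℝ) ^ (1 / p).toReal :=
    (dist_pi_lt_iff (by positivity)).2 hxy
  calc dist x y ≤ (Fintype.card ι : ℝ) ^ (1 / p).toReal * dist x.ofLp y.ofLp := by
        simpa using (PiLp.antilipschitzWith_ofLp p β).le_mul_dist x y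
    _ < δ := (lt_div_iff₀' hcard).1 hsup

lemma preimage_ofLp_pi_ball_subset_ball {β : ι → Type*} [∀ i, PseudoMetricSpace (β i)]
    (x : PiLp 2 β) {δ : ℝ} (hδ : 0 < δ) :
    WithLp.ofLp ⁻¹' Set.univ.pi (fun i ↦ Metric.ball (x i) (δ / √(Fintype.card ι))) ⊆
      Metric.ball x δ := fun y hy ↦
  piLp_dist_lt_of_forall_dist_lt_div hδ fun i ↦ by
    simpa [Real.sqrt_eq_rpow] using hy i (Set.mem_univ i)

lemma ofReal_min_le_volume_ball_inter_Icc {a b x r : ℝ} (hx : x ∈ Set.Icc a b) (hr : 0 ≤ r) :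
    ENNReal.ofReal (min r (b - a)) ≤ volume (Metric.ball x r ∩ Set.Icc a b) := by
  obtain ⟨hax, hxb⟩ := hx
  have hlength : min r (b - a) ≤ min (x + r) b - max (x - r) a := by grind
  calc ENNReal.ofReal (min r (b - a))
      ≤ ENNReal.ofReal (min (x + r) b - max (x - r) a) := ENNReal.ofReal_le_ofReal hlength
    _ = volume (Metric.ball x r ∩ Set.Ioo a b) := by
        rw [Real.ball_eq_Ioo, Set.Ioo_inter_Ioo, Real.volume_Ioo]
    _ ≤ volume (Metric.ball x r ∩ Set.Icc a b) := by gcongr; exact Set.Ioo_subset_Icc_self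

lemma volume_preimage_ofLp_pi (s : ι → Set ℝ) :
    volume ((WithLp.ofLp : EuclideanSpace ℝ ι → ι → ℝ) ⁻¹' Set.univ.pi s) =
      ∏ i, volume (s i) := by
  rw [(PiLp.volume_preserving_ofLp ι).measure_preimage_emb
    (MeasurableEquiv.toLp 2 (ι → ℝ)).symm.measurableEmbedding, volume_pi_pi]

lemma ofReal_prod_min_le_volume_ball_inter_box {a b : ι → ℝ} {x : EuclideanSpace ℝ ι}
    (hx : x.ofLp ∈ Set.Icc a b) {δ : ℝ} (hδ : 0 < δ) :
    ENNReal.ofReal (∏ i, min (δ / √(Fintype.card ι)) (b i - a i)) ≤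
      volume (Metric.ball x δ ∩ WithLp.ofLp ⁻¹' Set.Icc a b) := by
  set r := δ / √(Fintype.card ι)
  have hr : 0 ≤ r := by positivity
  have hside (i) : 0 ≤ b i - a i := sub_nonneg.2 ((hx.1 i).trans (hx.2 i))
  calc ENNReal.ofReal (∏ i, min r (b i - a i))
      = ∏ i, ENNReal.ofReal (min r (b i - a i)) :=
        ENNReal.ofReal_prod_of_nonneg fun i _ ↦ le_min hr (hside i)
    _ ≤ ∏ i, volume (Metric.ball (x i) r ∩ Set.Icc (a i) (b i)) := by
        gcongr with i
        exact ofReal_min_le_volume_ball_inter_Icc ⟨hx.1 i, hx.2 i⟩ hr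
    _ = volume (WithLp.ofLp ⁻¹' Set.univ.pi fun i ↦
          Metric.ball (x i) r ∩ Set.Icc (a i) (b i)) :=
        (volume_preimage_ofLp_pi _).symm
    _ ≤ volume (Metric.ball x δ ∩ WithLp.ofLp ⁻¹' Set.Icc a b) := by
        rw [Set.pi_inter_distrib, Set.pi_univ_Icc, Set.preimage_inter]
        gcongr
        exact preimage_ofLp_pi_ball_subset_ball x hδ

end Geometry

lemma mul_measure_le_withDensity_apply {α : Type*} [MeasurableSpace α] {μ : Measure α}
    {g : α → ℝ≥0∞} {c : ℝ≥0∞} {s : Set α} (hg : ∀ᵐ y ∂μ.restrict s, c ≤ g y) :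
    c * μ s ≤ μ.withDensity g s :=
  calc c * μ s = ∫⁻ _ in s, c ∂μ := (setLIntegral_const s c).symm
    _ ≤ ∫⁻ y in s, g y ∂μ := lintegral_mono_ae hg
    _ ≤ μ.withDensity g s := withDensity_apply_le g s

theorem withDensity_ball_box_lower_bound_general {ι : Type*} [Fintype ι] {a b : ι → ℝ}
    (hab : ∀ i, a i < b i) {g : EuclideanSpace ℝ ι → ℝ≥0∞} {c : ℝ≥0∞} (hc : 0 < c)
    (hg : ∀ᵐ y : EuclideanSpace ℝ ι, y ∈ WithLp.ofLp ⁻¹' Set.Icc a b → c ≤ g y)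
    {x : EuclideanSpace ℝ ι} (hx : x ∈ WithLp.ofLp ⁻¹' Set.Icc a b) {δ : ℝ} (hδ : 0 < δ) :
    c * ENNReal.ofReal (∏ i, min (δ / √(Fintype.card ι)) (b i - a i)) ≤
        volume.withDensity g (Metric.ball x δ ∩ WithLp.ofLp ⁻¹' Set.Icc a b) ∧
      0 < volume.withDensity g (Metric.ball x δ ∩ WithLp.ofLp ⁻¹' Set.Icc a b) := by
  have hbox : MeasurableSet (WithLp.ofLp ⁻¹' Set.Icc a b : Set (EuclideanSpace ℝ ι)) :=
    (PiLp.volume_preserving_ofLp ι).measurable measurableSet_Icc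
  have hbound := calc
    c * ENNReal.ofReal (∏ i, min (δ / √(Fintype.card ι)) (b i - a i))
      ≤ c * volume (Metric.ball x δ ∩ WithLp.ofLp ⁻¹' Set.Icc a b) := by
        gcongr
        exact ofReal_prod_min_le_volume_ball_inter_box hx hδ
    _ ≤ volume.withDensity g (Metric.ball x δ ∩ WithLp.ofLp ⁻¹' Set.Icc a b) :=
        mul_measure_le_withDensity_apply <|
          ae_restrict_of_ae_restrict_of_subset Set.inter_subset_right ((ae_restrict_iff' hbox).2 hg)
  have hprod : 0 < ∏ i, min (δ / √(Fintype.card ι)) (b i - a i) :=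
    Finset.prod_pos fun i _ ↦ by
      have : Nonempty ι := ⟨i⟩
      exact lt_min (by positivity) (sub_pos.2 (hab i))
  exact ⟨hbound, (ENNReal.mul_pos hc.ne' (ENNReal.ofReal_pos.2 hprod).ne').trans_le hbound⟩

theorem withDensity_ball_box_lower_bound
    (d : ℕ) (hd : 1 ≤ d) (a b : Fin d → ℝ) (hab : ∀ i, a i < b i)
    (D : Set (EuclideanSpace ℝ (Fin d)))
    (hD : D = {y : EuclideanSpace ℝ (Fin d) | ∀ i, a i ≤ y i ∧ y i ≤ b i})
    (g : EuclideanSpace ℝ (Fin d) → ℝ≥0∞)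
    (ν : Measure (EuclideanSpace ℝ (Fin d)))
    (hν : ν = volume.withDensity g) (hprob : IsProbabilityMeasure ν)
    (c : ℝ≥0∞) (hc : 0 < c)
    (hg : ∀ᵐ y ∂(volume : Measure (EuclideanSpace ℝ (Fin d))), y ∈ D → c ≤ g y)
    (x : EuclideanSpace ℝ (Fin d)) (hx : x ∈ D) (δ : ℝ) (hδ : 0 < δ) :
    c * ENNReal.ofReal (∏ i, min (δ / Real.sqrt d) (b i - a i)) ≤
        ν (Metric.ball x δ ∩ D) ∧
      0 < ν (Metric.ball x δ ∩ D) := by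
  obtain rfl : D = WithLp.ofLp ⁻¹' Set.Icc a b := hD.trans (Set.ext fun _ ↦ forall_and)
  simpa only [hν, Fintype.card_fin] using withDensity_ball_box_lower_bound_general hab hc hg hx hδ
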